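/- Let α : [0,∞) → (0,∞) be differentiable, nonincreasing, with lim_{t→∞} α(t) = 0 and lim_{t→∞} α′(t)/α(t)² = 0. Then lim_{t→∞} α(t)·exp(∫₀ᵗ α(s) ds) = +∞. -/

import Mathlib

open MeasureTheory Filter

/-!
Let `A` be a primitive of `α > 0`, and suppose that eventually `-k α² ≤ α'` with `k < 1`. Since
`(α exp (k A))' = (α' + k α²) exp (k A)`, the function `α exp (k A)` is eventually nondecreasing,
hence bounded below by a positive constant. The same is true with `1` in place of `k`, and there the
bound says that `(exp A)' = α exp A` stays away from `0`, so `A → ∞`. Finally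
`α exp A = α exp (k A) * exp ((1 - k) A)`, where the first factor is bounded below and the second
one tends to `∞`.
-/

theorem exists_monotoneOn_Ici_of_eventually_hasDerivAt_nonneg {f f' : ℝ → ℝ}
    (hf : ∀ᶠ t in atTop, HasDerivAt f (f' t) t) (hf' : ∀ᶠ t in atTop, 0 ≤ f' t) :
    ∃ T, MonotoneOn f (Set.Ici T) := by
  obtain ⟨T, hT⟩ := eventually_atTop.1 (hf.and hf')
  exact ⟨T, monotoneOn_of_hasDerivWithinAt_nonneg (convex_Ici T)
    (fun t ht => (hT t ht).1.continuousAt.continuousWithinAt)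
    (fun t ht => (hT t (interior_subset ht)).1.hasDerivWithinAt)
    (fun t ht => (hT t (interior_subset ht)).2)⟩

theorem tendsto_atTop_of_eventually_hasDerivAt_ge {f f' : ℝ → ℝ} {c : ℝ} (hc : 0 < c)
    (hf : ∀ᶠ t in atTop, HasDerivAt f (f' t) t) (hf' : ∀ᶠ t in atTop, c ≤ f' t) :
    Tendsto f atTop atTop := by
  obtain ⟨T, hT⟩ : ∃ T, MonotoneOn (fun t => f t - c * t) (Set.Ici T) :=
    exists_monotoneOn_Ici_of_eventually_hasDerivAt_nonneg
      (hf.mono fun t ht => ht.sub (hasDerivAt_const_mul c))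
      (hf'.mono fun _ => sub_nonneg.2)
  have hlinear : Tendsto (fun t => c * t + (f T - c * T)) atTop atTop :=
    tendsto_atTop_add_const_right _ _ (tendsto_id.const_mul_atTop hc)
  refine tendsto_atTop_mono' _ ?_ hlinear
  filter_upwards [eventually_ge_atTop T] with t ht
  linarith [hT Set.self_mem_Ici ht ht]

theorem hasDerivAt_integral_of_continuousOn_Ici {E : Type*} [NormedAddCommGroup E]
    [NormedSpace ℝ E] [CompleteSpace E] {f : ℝ → E} {a t : ℝ}
    (hf : ContinuousOn f (Set.Ici a)) (ht : a < t) :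
    HasDerivAt (fun u => ∫ s in a..u, f s) (f t) t :=
  intervalIntegral.integral_hasDerivAt_right
    ((hf.mono Set.Icc_subset_Ici_self).intervalIntegrable_of_Icc ht.le)
    ((hf.mono Set.Ioi_subset_Ici_self).stronglyMeasurableAtFilter isOpen_Ioi t ht)
    (hf.continuousAt (Ici_mem_nhds ht))

theorem eventually_mul_le_of_tendsto_div {ι : Type*} {l : Filter ι} {f g : ι → ℝ} {c L : ℝ}
    (hfg : Tendsto (fun i => f i / g i) l (nhds L)) (hg : ∀ᶠ i in l, 0 < g i) (hc : c < L) :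
    ∀ᶠ i in l, c * g i ≤ f i := by
  filter_upwards [hfg.eventually_const_le hc, hg] with i hi hgi
  exact (le_div_iff₀ hgi).1 hi

section Primitive

variable {α α' A : ℝ → ℝ} {k : ℝ}

theorem exists_pos_eventually_le_mul_exp_primitive
    (hα : ∀ᶠ t in atTop, HasDerivAt α (α' t) t) (hA : ∀ᶠ t in atTop, HasDerivAt A (α t) t)
    (hpos : ∀ᶠ t in atTop, 0 < α t) (hα' : ∀ᶠ t in atTop, -k * α t ^ 2 ≤ α' t) :
    ∃ c > 0, ∀ᶠ t in atTop, c ≤ α t * Real.exp (k * A t) := by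
  have hderiv : ∀ᶠ t in atTop, HasDerivAt (fun t => α t * Real.exp (k * A t))
      ((α' t + k * α t ^ 2) * Real.exp (k * A t)) t := by
    filter_upwards [hα, hA] with t hαt hAt
    exact (hαt.mul (hAt.const_mul k).exp).congr_deriv (by ring)
  have hnonneg : ∀ᶠ t in atTop, 0 ≤ (α' t + k * α t ^ 2) * Real.exp (k * A t) := by
    filter_upwards [hα'] with t ht
    exact mul_nonneg (by linarith) (Real.exp_pos _).le
  obtain ⟨T, hT⟩ := exists_monotoneOn_Ici_of_eventually_hasDerivAt_nonneg hderiv hnonneg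
  obtain ⟨t₀, hpos₀, ht₀⟩ := (hpos.and (eventually_ge_atTop T)).exists
  refine ⟨α t₀ * Real.exp (k * A t₀), mul_pos hpos₀ (Real.exp_pos _), ?_⟩
  filter_upwards [eventually_ge_atTop t₀] with t ht
  exact hT ht₀ (ht₀.trans ht) ht

theorem tendsto_primitive_atTop_of_neg_sq_le
    (hα : ∀ᶠ t in atTop, HasDerivAt α (α' t) t) (hA : ∀ᶠ t in atTop, HasDerivAt A (α t) t)
    (hpos : ∀ᶠ t in atTop, 0 < α t) (hα' : ∀ᶠ t in atTop, -α t ^ 2 ≤ α' t) :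
    Tendsto A atTop atTop := by
  obtain ⟨c, hc, hle⟩ : ∃ c > 0, ∀ᶠ t in atTop, c ≤ α t * Real.exp (1 * A t) :=
    exists_pos_eventually_le_mul_exp_primitive hα hA hpos (by simpa only [neg_one_mul] using hα')
  refine Real.tendsto_exp_comp_atTop.1 (tendsto_atTop_of_eventually_hasDerivAt_ge hc
    (hA.mono fun t ht => ht.exp) ?_)
  simpa only [one_mul, mul_comm (Real.exp _)] using hle

theorem tendsto_mul_exp_primitive_atTop_of_neg_mul_sq_le
    (hα : ∀ᶠ t in atTop, HasDerivAt α (α' t) t) (hA : ∀ᶠ t in atTop, HasDerivAt A (α t) t)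
    (hpos : ∀ᶠ t in atTop, 0 < α t) (hk : k < 1) (hα' : ∀ᶠ t in atTop, -k * α t ^ 2 ≤ α' t) :
    Tendsto (fun t => α t * Real.exp (A t)) atTop atTop := by
  have hA_atTop : Tendsto A atTop atTop := by
    refine tendsto_primitive_atTop_of_neg_sq_le hα hA hpos ?_
    filter_upwards [hα'] with t ht
    nlinarith [sq_nonneg (α t)]
  obtain ⟨c, hc, hle⟩ := exists_pos_eventually_le_mul_exp_primitive hα hA hpos hα'
  have hexp : Tendsto (fun t => Real.exp ((1 - k) * A t)) atTop atTop :=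
    Real.tendsto_exp_comp_atTop.2 (hA_atTop.const_mul_atTop (sub_pos.2 hk))
  refine tendsto_atTop_mono' _ ?_ (hexp.const_mul_atTop hc)
  filter_upwards [hle] with t ht
  calc c * Real.exp ((1 - k) * A t)
      ≤ α t * Real.exp (k * A t) * Real.exp ((1 - k) * A t) := by gcongr
    _ = α t * Real.exp (A t) := by rw [mul_assoc, ← Real.exp_add]; ring_nf

end Primitive

theorem alpha_exp_integral_tendsto_atTop_general {α α' : ℝ → ℝ} {a k : ℝ}
    (hcont : ContinuousOn α (Set.Ici a)) (hα : ∀ᶠ t in atTop, HasDerivAt α (α' t) t)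
    (hpos : ∀ᶠ t in atTop, 0 < α t) (hk : k < 1) (hα' : ∀ᶠ t in atTop, -k * α t ^ 2 ≤ α' t) :
    Tendsto (fun t => α t * Real.exp (∫ s in a..t, α s)) atTop atTop :=
  tendsto_mul_exp_primitive_atTop_of_neg_mul_sq_le hα
    ((eventually_gt_atTop a).mono fun _ => hasDerivAt_integral_of_continuousOn_Ici hcont)
    hpos hk hα'

/-- Formula (5.2): if `α > 0` is differentiable, nonincreasing, `α(t) → 0`, and
`α′(t)/α(t)² → 0`, then `α(t) exp(∫₀ᵗ α) → +∞`. -/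
theorem alpha_exp_integral_tendsto_atTop
    (α α' : ℝ → ℝ)
    (hα : ∀ t ≥ (0:ℝ), HasDerivAt α (α' t) t)
    (hαpos : ∀ t ≥ (0:ℝ), 0 < α t)
    (hα'np : ∀ t ≥ (0:ℝ), α' t ≤ 0)
    (hαlim : Tendsto α atTop (nhds 0))
    (hratio : Tendsto (fun t => α' t / α t ^ 2) atTop (nhds 0)) :
    Tendsto (fun t => α t * Real.exp (∫ s in (0:ℝ)..t, α s)) atTop atTop := by
  have hpos : ∀ᶠ t in atTop, 0 < α t := (eventually_ge_atTop 0).mono hαpos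
  exact alpha_exp_integral_tendsto_atTop_general (HasDerivAt.continuousOn hα)
    ((eventually_ge_atTop 0).mono hα) hpos one_half_lt_one
    (eventually_mul_le_of_tendsto_div hratio (hpos.mono fun _ ht => pow_pos ht 2) (by norm_num))
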